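/- Let (Φ₁,Φ₂) be a branching mechanism, V the unique solution of the cumulant equations (3.8), and H the moment matrix; suppose all eigenvalues of H have strictly negative real parts. Let Ψ be an immigration mechanism with measure m. Then ∫₀^∞ Ψ(V(s,λ)) ds < ∞ for every λ ∈ [0,∞)² if and only if ∫_{{z∈𝕄 : |z|≥1}} log|z| m(dz) < ∞, where |z| is the Euclidean norm. (This finiteness of ∫₀^∞ Ψ(V(s,λ)) ds is exactly the condition under which the MSBI transition probabilities P^γ_t(x,·) converge to a stationary distribution.) -/

import Mathlib

open MeasureTheory Filter Set

noncomputable section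

/-- The state space `𝕄 = [0,∞) × ℕ`, as a subset of `ℝ²`. -/
def Mset : Set (ℝ × ℝ) := {z | 0 ≤ z.1 ∧ ∃ n : ℕ, z.2 = (n : ℝ)}

/-- The space `𝕄₋₁ = [0,∞) × (ℕ ∪ {-1})`, as a subset of `ℝ²`. -/
def Mm1set : Set (ℝ × ℝ) := {z | 0 ≤ z.1 ∧ ∃ n : ℤ, (-1 : ℤ) ≤ n ∧ z.2 = (n : ℝ)}

/-- The data of a branching mechanism `(Φ₁, Φ₂)` of a mixed state branching process. -/
structure BranchingMechanism where
  a11 : ℝ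
  a21 : ℝ
  alpha : ℝ
  a21_nonneg : 0 ≤ a21
  alpha_nonneg : 0 ≤ alpha
  n1 : Measure (ℝ × ℝ)
  n2 : Measure (ℝ × ℝ)
  n1_sigmaFinite : SigmaFinite n1
  n2_sigmaFinite : SigmaFinite n2
  /-- `n₁` is supported on `𝕄` -/
  n1_supp : n1 Msetᶜ = 0
  /-- `n₂` is supported on `𝕄₋₁` -/
  n2_supp : n2 Mm1setᶜ = 0
  /-- `n₁` does not charge the origin -/
  n1_zero : n1 {0} = 0
  /-- `n₂` does not charge the origin -/
  n2_zero : n2 {0} = 0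
  /-- `n₂([0,∞) × {-1}) < ∞` -/
  n2_neg1 : n2 {z : ℝ × ℝ | z.2 = -1} ≠ ⊤
  /-- `∫ (z₁ ∧ z₁² + z₂) n₁(dz) < ∞` -/
  n1_moment : ∫⁻ z, ENNReal.ofReal (min z.1 (z.1 ^ 2) + z.2) ∂n1 ≠ ⊤
  /-- `∫ (z₁ + |z₂|) n₂(dz) < ∞` -/
  n2_moment : ∫⁻ z, ENNReal.ofReal (z.1 + |z.2|) ∂n2 ≠ ⊤

/-- `Φ₁(λ) = -a₁₁λ₁ - αλ₁² - ∫ (e^{-⟨λ,z⟩} - 1 + λ₁z₁) n₁(dz)`. -/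
def mPhi1 (B : BranchingMechanism) (l : ℝ × ℝ) : ℝ :=
  -B.a11 * l.1 - B.alpha * l.1 ^ 2 -
    ∫ z, (Real.exp (-(l.1 * z.1 + l.2 * z.2)) - 1 + l.1 * z.1) ∂B.n1

/-- `Φ₂(λ) = a₂₁λ₁ + ∫ (1 - e^{-⟨λ,z⟩}) n₂(dz)`. -/
def mPhi2 (B : BranchingMechanism) (l : ℝ × ℝ) : ℝ :=
  B.a21 * l.1 + ∫ z, (1 - Real.exp (-(l.1 * z.1 + l.2 * z.2))) ∂B.n2


/-- `V : t ↦ V(t,λ)` is a continuous `[0,∞)²`-valued solution of the cumulant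
equations (3.8) with initial value `λ = l`. -/
def SolvesCumulant (B : BranchingMechanism) (l : ℝ × ℝ) (V : ℝ → ℝ × ℝ) : Prop :=
  ContinuousOn V (Ici 0) ∧
  (∀ t : ℝ, 0 ≤ t → 0 ≤ (V t).1 ∧ 0 ≤ (V t).2) ∧
  (∀ t : ℝ, 0 ≤ t →
    (V t).1 = l.1 + ∫ s in (0:ℝ)..t, mPhi1 B (V s) ∧
    (V t).2 = l.2 + ∫ s in (0:ℝ)..t, mPhi2 B (V s))

/-- Entries of the moment matrix `H`. -/
def H11 (B : BranchingMechanism) : ℝ := -B.a11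
def H12 (B : BranchingMechanism) : ℝ := ∫ z, z.2 ∂B.n1
def H21 (B : BranchingMechanism) : ℝ := B.a21 + ∫ z, z.1 ∂B.n2
def H22 (B : BranchingMechanism) : ℝ := ∫ z, z.2 ∂B.n2

/-- The moment matrix `H` of a branching mechanism. -/
def Hmat (B : BranchingMechanism) : Matrix (Fin 2) (Fin 2) ℝ :=
  !![H11 B, H12 B; H21 B, H22 B]

/-- The immigration mechanism `Ψ(λ) = bλ₁ + ∫ (1 - e^{-⟨λ,z⟩}) m(dz)`. -/
def mPsi (b : ℝ) (m : Measure (ℝ × ℝ)) (l : ℝ × ℝ) : ℝ :=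
  b * l.1 + ∫ z, (1 - Real.exp (-(l.1 * z.1 + l.2 * z.2))) ∂m

lemma aux_exp_le_sq {x : ℝ} (hx : 0 ≤ x) : Real.exp (-x) - 1 + x ≤ x ^ 2 := by
  have h1 : 0 < 1 + x := by linarith
  have h2 : Real.exp (-x) ≤ 1 / (1 + x) := by
    rw [Real.exp_neg, ← one_div]
    exact one_div_le_one_div_of_le h1 (by linarith [Real.add_one_le_exp x])
  have h3 : 1 / (1 + x) ≤ 1 - x + x ^ 2 := by
    rw [div_le_iff₀ h1]; nlinarith [pow_nonneg hx 3]
  linarith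

lemma aux_n1_ae (B : BranchingMechanism) : ∀ᵐ z ∂B.n1, 0 ≤ z.1 ∧ 0 ≤ z.2 := by
  have : ∀ᵐ z ∂B.n1, z ∈ Mset := mem_ae_iff.2 B.n1_supp
  filter_upwards [this] with z hz
  obtain ⟨h, n, hn⟩ := hz
  exact ⟨h, by rw [hn]; positivity⟩

lemma aux_n2_ae (B : BranchingMechanism) : ∀ᵐ z ∂B.n2, 0 ≤ z.1 ∧ (0 ≤ z.2 ∨ z.2 = -1) := by
  have : ∀ᵐ z ∂B.n2, z ∈ Mm1set := mem_ae_iff.2 B.n2_supp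
  filter_upwards [this] with z hz
  obtain ⟨h, n, hn, hz⟩ := hz
  refine ⟨h, ?_⟩
  rcases hn.eq_or_lt with h | h
  · right; rw [hz, ← h]; norm_num
  · left; rw [hz]; exact_mod_cast (by omega : (0:ℤ) ≤ n)

def D1 (z : ℝ × ℝ) : ℝ := min z.1 (z.1 ^ 2) + z.2
def D2 (z : ℝ × ℝ) : ℝ := z.1 + |z.2|

lemma aux_D1_nonneg {z : ℝ × ℝ} (h1 : 0 ≤ z.1) (h2 : 0 ≤ z.2) : 0 ≤ D1 z :=
  add_nonneg (le_min h1 (sq_nonneg _)) h2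

lemma aux_D1_int (B : BranchingMechanism) : Integrable D1 B.n1 := by
  have hm : AEStronglyMeasurable D1 B.n1 := by
    apply Continuous.aestronglyMeasurable; unfold D1; fun_prop
  have h := (lintegral_ofReal_ne_top_iff_integrable (μ := B.n1) (f := D1) hm ?_).1 B.n1_moment
  · exact h
  · filter_upwards [aux_n1_ae B] with z hz using aux_D1_nonneg hz.1 hz.2

lemma aux_D2_int (B : BranchingMechanism) : Integrable D2 B.n2 := by
  have hm : AEStronglyMeasurable D2 B.n2 := by
    apply Continuous.aestronglyMeasurable; unfold D2; fun_prop
  have h := (lintegral_ofReal_ne_top_iff_integrable (μ := B.n2) (f := D2) hm ?_).1 B.n2_moment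
  · exact h
  · filter_upwards [aux_n2_ae B] with z hz using add_nonneg hz.1 (abs_nonneg _)

def F1 (l z : ℝ × ℝ) : ℝ := Real.exp (-(l.1 * z.1 + l.2 * z.2)) - 1 + l.1 * z.1
def F2 (l z : ℝ × ℝ) : ℝ := 1 - Real.exp (-(l.1 * z.1 + l.2 * z.2))

lemma aux_F1_lower {l z : ℝ × ℝ} : -(l.2 * z.2) ≤ F1 l z := by
  unfold F1
  linarith [Real.add_one_le_exp (-(l.1 * z.1 + l.2 * z.2))]

lemma aux_F1_upper {l z : ℝ × ℝ} {M : ℝ} (hM : 1 ≤ M) (h1 : 0 ≤ l.1) (h2 : 0 ≤ l.2)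
    (h1M : l.1 ≤ M) (hz1 : 0 ≤ z.1) (hz2 : 0 ≤ z.2) : F1 l z ≤ M * l.1 * D1 z := by
  have hx : 0 ≤ l.1 * z.1 := mul_nonneg h1 hz1
  have hle : F1 l z ≤ Real.exp (-(l.1 * z.1)) - 1 + l.1 * z.1 := by
    unfold F1
    have : Real.exp (-(l.1 * z.1 + l.2 * z.2)) ≤ Real.exp (-(l.1 * z.1)) :=
      Real.exp_le_exp.2 (by linarith [mul_nonneg h2 hz2])
    linarith
  have ha : F1 l z ≤ l.1 * z.1 := by
    have : Real.exp (-(l.1 * z.1)) ≤ 1 := Real.exp_le_one_iff.2 (by linarith)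
    linarith
  have hb : F1 l z ≤ l.1 ^ 2 * z.1 ^ 2 := by
    have := aux_exp_le_sq hx
    nlinarith
  have hMl : l.1 ≤ M * l.1 := by nlinarith
  have hMl2 : l.1 ^ 2 ≤ M * l.1 := by nlinarith
  have hMn : 0 ≤ M * l.1 := by positivity
  have hmin : F1 l z ≤ M * l.1 * min z.1 (z.1 ^ 2) := by
    rcases min_choice z.1 (z.1 ^ 2) with h | h <;> rw [h]
    · exact ha.trans (mul_le_mul_of_nonneg_right hMl hz1)
    · exact hb.trans (mul_le_mul_of_nonneg_right hMl2 (sq_nonneg _))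
  have : 0 ≤ M * l.1 * z.2 := mul_nonneg hMn hz2
  unfold D1
  linarith

lemma aux_F1_abs {l z : ℝ × ℝ} {M : ℝ} (hM : 1 ≤ M) (h1 : 0 ≤ l.1) (h2 : 0 ≤ l.2)
    (h1M : l.1 ≤ M) (h2M : l.2 ≤ M) (hz1 : 0 ≤ z.1) (hz2 : 0 ≤ z.2) :
    |F1 l z| ≤ M * M * D1 z := by
  have hD := aux_D1_nonneg hz1 hz2
  rw [abs_le]
  constructor
  · have a := aux_F1_lower (l := l) (z := z)
    have b : l.2 * z.2 ≤ M * z.2 := mul_le_mul_of_nonneg_right h2M hz2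
    have c : z.2 ≤ D1 z := by
      unfold D1; linarith [le_min hz1 (sq_nonneg z.1)]
    have d : M * z.2 ≤ M * D1 z := mul_le_mul_of_nonneg_left c (by linarith)
    have e : M * D1 z ≤ M * M * D1 z := mul_le_mul_of_nonneg_right (by nlinarith) hD
    linarith
  · refine (aux_F1_upper hM h1 h2 h1M hz1 hz2).trans ?_
    exact mul_le_mul_of_nonneg_right (by nlinarith) hD

lemma aux_F2_upper {l z : ℝ × ℝ} : F2 l z ≤ l.1 * z.1 + l.2 * z.2 := by
  unfold F2
  linarith [Real.add_one_le_exp (-(l.1 * z.1 + l.2 * z.2))]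

lemma aux_expM {y M : ℝ} (hy : 0 ≤ y) (h : y ≤ M) : Real.exp y - 1 ≤ y * Real.exp M := by
  have h1 := Real.add_one_le_exp (-y)
  have h2 : Real.exp y * Real.exp (-y) = 1 := by rw [← Real.exp_add]; simp
  have h3 : Real.exp y ≤ Real.exp M := Real.exp_le_exp.2 h
  nlinarith [Real.exp_pos y]

lemma aux_F2_lower {l z : ℝ × ℝ} {M : ℝ} (h1 : 0 ≤ l.1) (h2 : 0 ≤ l.2)
    (h2M : l.2 ≤ M) (hz1 : 0 ≤ z.1) (hz2 : 0 ≤ z.2 ∨ z.2 = -1) :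
    -(l.2 * Real.exp M * D2 z) ≤ F2 l z := by
  have hp : 0 ≤ l.2 * Real.exp M := by positivity
  have hl := mul_nonneg h1 hz1
  have hD : 0 ≤ D2 z := add_nonneg hz1 (abs_nonneg _)
  rcases hz2 with h | h
  · have : Real.exp (-(l.1 * z.1 + l.2 * z.2)) ≤ 1 :=
      Real.exp_le_one_iff.2 (by linarith [mul_nonneg h2 h])
    have := mul_nonneg hp hD
    unfold F2; linarith
  · have a : Real.exp (-(l.1 * z.1 + l.2 * z.2)) ≤ Real.exp l.2 :=
      Real.exp_le_exp.2 (by rw [h]; linarith)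
    have b := aux_expM h2 h2M
    have c : 1 ≤ D2 z := by unfold D2; rw [h]; norm_num; exact hz1
    have d := le_mul_of_one_le_right hp c
    unfold F2; linarith

lemma aux_F2_abs {l z : ℝ × ℝ} {M : ℝ} (hM : 1 ≤ M) (h1 : 0 ≤ l.1) (h2 : 0 ≤ l.2)
    (h1M : l.1 ≤ M) (h2M : l.2 ≤ M) (hz1 : 0 ≤ z.1) (hz2 : 0 ≤ z.2 ∨ z.2 = -1) :
    |F2 l z| ≤ M * Real.exp M * D2 z := by
  have hD : 0 ≤ D2 z := add_nonneg hz1 (abs_nonneg _)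
  have he : 1 ≤ Real.exp M := Real.one_le_exp (by linarith)
  rw [abs_le]
  constructor
  · have a := aux_F2_lower h1 h2 h2M hz1 hz2
    have : l.2 * Real.exp M * D2 z ≤ M * Real.exp M * D2 z := by gcongr
    linarith
  · have a := aux_F2_upper (l := l) (z := z)
    have b : l.1 * z.1 ≤ M * z.1 := by gcongr
    have c : l.2 * z.2 ≤ M * |z.2| :=
      (mul_le_mul_of_nonneg_left (le_abs_self _) h2).trans (by gcongr)
    have d : M * D2 z ≤ M * Real.exp M * D2 z :=
      mul_le_mul_of_nonneg_right (by nlinarith) hD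
    unfold D2 at *
    linarith

lemma aux_F1_cont : Continuous (fun p : (ℝ × ℝ) × (ℝ × ℝ) => F1 p.1 p.2) := by
  unfold F1; fun_prop
lemma aux_F2_cont : Continuous (fun p : (ℝ × ℝ) × (ℝ × ℝ) => F2 p.1 p.2) := by
  unfold F2; fun_prop

lemma aux_F1_int (B : BranchingMechanism) {l : ℝ × ℝ} (h1 : 0 ≤ l.1) (h2 : 0 ≤ l.2) :
    Integrable (F1 l) B.n1 := by
  refine Integrable.mono' ((aux_D1_int B).const_mul ((1 + l.1 + l.2) * (1 + l.1 + l.2))) ?_ ?_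
  · apply Continuous.aestronglyMeasurable; unfold F1; fun_prop
  · filter_upwards [aux_n1_ae B] with z hz
    exact aux_F1_abs (by linarith) h1 h2 (by linarith) (by linarith) hz.1 hz.2

lemma aux_F2_int (B : BranchingMechanism) {l : ℝ × ℝ} (h1 : 0 ≤ l.1) (h2 : 0 ≤ l.2) :
    Integrable (F2 l) B.n2 := by
  refine Integrable.mono'
    ((aux_D2_int B).const_mul ((1 + l.1 + l.2) * Real.exp (1 + l.1 + l.2))) ?_ ?_
  · apply Continuous.aestronglyMeasurable; unfold F2; fun_prop
  · filter_upwards [aux_n2_ae B] with z hz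
    exact aux_F2_abs (by linarith) h1 h2 (by linarith) (by linarith) hz.1 hz.2

lemma aux_cont1 (B : BranchingMechanism) {W : ℝ → ℝ × ℝ} (hW : Continuous W)
    (hW0 : ∀ s, 0 ≤ (W s).1 ∧ 0 ≤ (W s).2) : Continuous (fun s => mPhi1 B (W s)) := by
  have key : Continuous (fun s => ∫ z, F1 (W s) z ∂B.n1) := by
    rw [continuous_iff_continuousAt]
    intro s
    set M := 1 + (W s).1 + (W s).2 with hMd
    have hs := hW0 s
    have e1 : ∀ᶠ t in nhds s, (W t).1 < M :=
      (continuous_fst.comp hW).continuousAt.eventually_lt_const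
        (show (W s).1 < M by linarith)
    have e2 : ∀ᶠ t in nhds s, (W t).2 < M :=
      (continuous_snd.comp hW).continuousAt.eventually_lt_const
        (show (W s).2 < M by linarith)
    refine continuousAt_of_dominated (bound := fun z => M * M * D1 z) ?_ ?_
      ((aux_D1_int B).const_mul _) ?_
    · refine Eventually.of_forall fun t => ?_
      apply Continuous.aestronglyMeasurable; unfold F1; fun_prop
    · filter_upwards [e1, e2] with t h1 h2
      filter_upwards [aux_n1_ae B] with z hz
      exact aux_F1_abs (by linarith) (hW0 t).1 (hW0 t).2 h1.le h2.le hz.1 hz.2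
    · refine Eventually.of_forall fun z => ?_
      apply Continuous.continuousAt; unfold F1; fun_prop
  unfold mPhi1
  unfold F1 at key
  fun_prop

lemma aux_cont2 (B : BranchingMechanism) {W : ℝ → ℝ × ℝ} (hW : Continuous W)
    (hW0 : ∀ s, 0 ≤ (W s).1 ∧ 0 ≤ (W s).2) : Continuous (fun s => mPhi2 B (W s)) := by
  have key : Continuous (fun s => ∫ z, F2 (W s) z ∂B.n2) := by
    rw [continuous_iff_continuousAt]
    intro s
    set M := 1 + (W s).1 + (W s).2 with hMd
    have hs := hW0 s
    have e1 : ∀ᶠ t in nhds s, (W t).1 < M :=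
      (continuous_fst.comp hW).continuousAt.eventually_lt_const
        (show (W s).1 < M by linarith)
    have e2 : ∀ᶠ t in nhds s, (W t).2 < M :=
      (continuous_snd.comp hW).continuousAt.eventually_lt_const
        (show (W s).2 < M by linarith)
    refine continuousAt_of_dominated (bound := fun z => M * Real.exp M * D2 z) ?_ ?_
      ((aux_D2_int B).const_mul _) ?_
    · refine Eventually.of_forall fun t => ?_
      apply Continuous.aestronglyMeasurable; unfold F2; fun_prop
    · filter_upwards [e1, e2] with t h1 h2
      filter_upwards [aux_n2_ae B] with z hz
      exact aux_F2_abs (by linarith) (hW0 t).1 (hW0 t).2 h1.le h2.le hz.1 hz.2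
    · refine Eventually.of_forall fun z => ?_
      apply Continuous.continuousAt; unfold F2; fun_prop
  unfold mPhi2
  unfold F2 at key
  fun_prop

lemma aux_n1_z2 (B : BranchingMechanism) : Integrable (fun z : ℝ × ℝ => z.2) B.n1 := by
  refine Integrable.mono' (aux_D1_int B) (by fun_prop) ?_
  filter_upwards [aux_n1_ae B] with z hz
  rw [Real.norm_of_nonneg hz.2]
  unfold D1; linarith [le_min hz.1 (sq_nonneg z.1)]

lemma aux_n2_z1 (B : BranchingMechanism) : Integrable (fun z : ℝ × ℝ => z.1) B.n2 := by
  refine Integrable.mono' (aux_D2_int B) (by fun_prop) ?_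
  filter_upwards [aux_n2_ae B] with z hz
  rw [Real.norm_of_nonneg hz.1]
  unfold D2; linarith [abs_nonneg z.2]

lemma aux_n2_z2 (B : BranchingMechanism) : Integrable (fun z : ℝ × ℝ => z.2) B.n2 := by
  refine Integrable.mono' (aux_D2_int B) (by fun_prop) ?_
  filter_upwards [aux_n2_ae B] with z hz
  rw [Real.norm_eq_abs]
  unfold D2; linarith [hz.1]

lemma aux_Phi1_upper (B : BranchingMechanism) {l : ℝ × ℝ} (h1 : 0 ≤ l.1) (h2 : 0 ≤ l.2) :
    mPhi1 B l ≤ H11 B * l.1 + H12 B * l.2 := by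
  have h : ∫ z, -(l.2 * z.2) ∂B.n1 ≤ ∫ z, F1 l z ∂B.n1 :=
    integral_mono ((aux_n1_z2 B).const_mul _).neg (aux_F1_int B h1 h2)
      (fun z => aux_F1_lower)
  rw [integral_neg, integral_const_mul] at h
  have := mul_nonneg B.alpha_nonneg (sq_nonneg l.1)
  unfold F1 at h
  unfold mPhi1 H11 H12
  linarith

lemma aux_Phi2_upper (B : BranchingMechanism) {l : ℝ × ℝ} (h1 : 0 ≤ l.1) (h2 : 0 ≤ l.2) :
    mPhi2 B l ≤ H21 B * l.1 + H22 B * l.2 := by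
  have h : ∫ z, F2 l z ∂B.n2 ≤ ∫ z, (l.1 * z.1 + l.2 * z.2) ∂B.n2 :=
    integral_mono (aux_F2_int B h1 h2)
      (((aux_n2_z1 B).const_mul _).add ((aux_n2_z2 B).const_mul _))
      (fun z => aux_F2_upper)
  rw [integral_add ((aux_n2_z1 B).const_mul _) ((aux_n2_z2 B).const_mul _),
    integral_const_mul, integral_const_mul] at h
  unfold F2 at h
  unfold mPhi2 H21 H22
  linarith

lemma aux_Phi1_lower (B : BranchingMechanism) {l : ℝ × ℝ} {M : ℝ} (hM : 1 ≤ M)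
    (h1 : 0 ≤ l.1) (h2 : 0 ≤ l.2) (h1M : l.1 ≤ M) :
    -((|B.a11| + B.alpha * M + M * ∫ z, D1 z ∂B.n1) * l.1) ≤ mPhi1 B l := by
  have h : ∫ z, F1 l z ∂B.n1 ≤ ∫ z, M * l.1 * D1 z ∂B.n1 := by
    refine integral_mono_ae (aux_F1_int B h1 h2) ((aux_D1_int B).const_mul _) ?_
    filter_upwards [aux_n1_ae B] with z hz
    exact aux_F1_upper hM h1 h2 h1M hz.1 hz.2
  rw [integral_const_mul] at h
  have a : B.alpha * l.1 ^ 2 ≤ B.alpha * M * l.1 := by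
    have := mul_le_mul_of_nonneg_left h1M (mul_nonneg B.alpha_nonneg h1)
    nlinarith
  have c : B.a11 * l.1 ≤ |B.a11| * l.1 := mul_le_mul_of_nonneg_right (le_abs_self _) h1
  unfold F1 at h
  unfold mPhi1
  linarith

lemma aux_Phi2_lower (B : BranchingMechanism) {l : ℝ × ℝ} {M : ℝ}
    (h1 : 0 ≤ l.1) (h2 : 0 ≤ l.2) (h2M : l.2 ≤ M) :
    -((Real.exp M * ∫ z, D2 z ∂B.n2) * l.2) ≤ mPhi2 B l := by
  have h : ∫ z, -(l.2 * Real.exp M * D2 z) ∂B.n2 ≤ ∫ z, F2 l z ∂B.n2 := by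
    refine integral_mono_ae ((aux_D2_int B).const_mul _).neg (aux_F2_int B h1 h2) ?_
    filter_upwards [aux_n2_ae B] with z hz
    exact aux_F2_lower h1 h2 h2M hz.1 hz.2
  rw [integral_neg, integral_const_mul] at h
  have := mul_nonneg B.a21_nonneg h1
  unfold F2 at h
  unfold mPhi2
  linarith

/-- scalar Gronwall in integral form -/
lemma aux_gron {f g : ℝ → ℝ} {a c : ℝ} (hg : Continuous g)
    (hf : ∀ t, 0 ≤ t → f t = a + ∫ s in (0:ℝ)..t, g s)
    (hle : ∀ t, 0 ≤ t → g t ≤ -c * f t) {t : ℝ} (ht : 0 ≤ t) :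
    f t ≤ a * Real.exp (-c * t) := by
  set u : ℝ → ℝ := fun t => a + ∫ s in (0:ℝ)..t, g s with hu
  have hd : ∀ x, HasDerivAt u (g x) x := fun x =>
    (intervalIntegral.integral_hasDerivAt_right (hg.intervalIntegrable _ _)
      hg.aestronglyMeasurable.stronglyMeasurableAtFilter hg.continuousAt).const_add a
  have hd2 : ∀ x, HasDerivAt (fun x => Real.exp (c * x) * u x)
      (Real.exp (c * x) * (c * 1) * u x + Real.exp (c * x) * g x) x := fun x =>
    (((hasDerivAt_id x).const_mul c).exp).mul (hd x)
  have hanti : AntitoneOn (fun x => Real.exp (c * x) * u x) (Ici 0) := by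
    apply antitoneOn_of_deriv_nonpos (convex_Ici 0)
    · exact fun x _ => (hd2 x).continuousAt.continuousWithinAt
    · exact fun x _ => (hd2 x).differentiableAt.differentiableWithinAt
    · intro x hx
      rw [interior_Ici] at hx
      have hx0 : (0:ℝ) ≤ x := le_of_lt hx
      rw [(hd2 x).deriv]
      have h := hle x hx0
      rw [hf x hx0] at h
      have : g x ≤ -c * u x := h
      nlinarith [Real.exp_pos (c * x)]
  have h := hanti (mem_Ici.2 (le_refl (0:ℝ))) ht ht
  have h0 : u 0 = a := by simp [hu]
  simp only [mul_zero, Real.exp_zero, one_mul, h0] at h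
  have h1 : Real.exp (-c * t) * Real.exp (c * t) = 1 := by rw [← Real.exp_add]; simp
  rw [hf t ht]
  change u t ≤ _
  calc u t = Real.exp (-c * t) * (Real.exp (c * t) * u t) := by rw [← mul_assoc, h1, one_mul]
    _ ≤ Real.exp (-c * t) * a := mul_le_mul_of_nonneg_left h (Real.exp_pos _).le
    _ = _ := mul_comm _ _

lemma aux_spec (B : BranchingMechanism)
    (hspec : ∀ μ : ℂ, μ ∈ spectrum ℂ ((Hmat B).map (Complex.ofReal ·)) → μ.re < 0) :
    0 ≤ H12 B ∧ 0 ≤ H21 B ∧ H11 B < 0 ∧ H22 B < 0 ∧ 0 < H11 B * H22 B - H12 B * H21 B := by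
  have h12 : 0 ≤ H12 B := by
    apply integral_nonneg_of_ae
    filter_upwards [aux_n1_ae B] with z hz using hz.2
  have h21 : 0 ≤ H21 B := by
    refine add_nonneg B.a21_nonneg (integral_nonneg_of_ae ?_)
    filter_upwards [aux_n2_ae B] with z hz using hz.1
  have hs := hspec
  unfold Hmat at hs
  generalize H11 B = p at *
  generalize H12 B = q at *
  generalize H21 B = r at *
  generalize H22 B = w at *
  have hD : 0 ≤ (p - w) ^ 2 + 4 * (q * r) := by positivity
  set d := Real.sqrt ((p - w) ^ 2 + 4 * (q * r)) with hd
  have hd2 : d ^ 2 = (p - w) ^ 2 + 4 * (q * r) := Real.sq_sqrt hD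
  have hd0 : 0 ≤ d := Real.sqrt_nonneg _
  have hmem : (((p + w + d) / 2 : ℝ) : ℂ) ∈ spectrum ℂ
      ((!![p, q; r, w] : Matrix (Fin 2) (Fin 2) ℝ).map (Complex.ofReal ·)) := by
    rw [spectrum.mem_iff, Matrix.isUnit_iff_isUnit_det]
    have : ((algebraMap ℂ (Matrix (Fin 2) (Fin 2) ℂ)) (((p + w + d) / 2 : ℝ) : ℂ) -
        (!![p, q; r, w] : Matrix (Fin 2) (Fin 2) ℝ).map (Complex.ofReal ·)).det =
        ((((p + w + d) / 2 - p) * ((p + w + d) / 2 - w) - q * r : ℝ) : ℂ) := by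
      rw [Matrix.det_fin_two]
      simp [Matrix.algebraMap_matrix_apply]
    rw [this]
    have : ((p + w + d) / 2 - p) * ((p + w + d) / 2 - w) - q * r = 0 := by nlinarith
    rw [this]; simp
  have hneg := hs _ hmem
  rw [Complex.ofReal_re] at hneg
  have hlt : d < -(p + w) := by linarith
  have hdet : 0 < p * w - q * r := by nlinarith
  have hqr : 0 ≤ q * r := mul_nonneg h12 h21
  have hpw : 0 < p * w := by linarith
  refine ⟨h12, h21, ?_, ?_, hdet⟩
  · by_contra h
    push Not at h
    have : p ≠ 0 := by rintro rfl; simp at hpw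
    have hp : 0 < p := lt_of_le_of_ne h this.symm
    have : 0 < w := by nlinarith
    linarith
  · by_contra h
    push Not at h
    have : w ≠ 0 := by rintro rfl; simp at hpw
    have hp : 0 < w := lt_of_le_of_ne h this.symm
    have : 0 < p := by nlinarith
    linarith

lemma aux_path (B : BranchingMechanism) {l : ℝ × ℝ} {U : ℝ → ℝ × ℝ}
    (hU : SolvesCumulant B l U) :
    Continuous (fun s => mPhi1 B (U (max s 0))) ∧ Continuous (fun s => mPhi2 B (U (max s 0))) ∧
    (∀ t, 0 ≤ t → (U t).1 = l.1 + ∫ s in (0:ℝ)..t, mPhi1 B (U (max s 0))) ∧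
    (∀ t, 0 ≤ t → (U t).2 = l.2 + ∫ s in (0:ℝ)..t, mPhi2 B (U (max s 0))) := by
  obtain ⟨hc, hn, he⟩ := hU
  have hW : Continuous (fun s => U (max s 0)) :=
    hc.comp_continuous (by fun_prop) (fun s => le_max_right s 0)
  have hW0 : ∀ s, 0 ≤ (U (max s 0)).1 ∧ 0 ≤ (U (max s 0)).2 :=
    fun s => hn _ (le_max_right s 0)
  refine ⟨aux_cont1 B hW hW0, aux_cont2 B hW hW0, ?_, ?_⟩
  · intro t ht
    rw [(he t ht).1]
    congr 1
    apply intervalIntegral.integral_congr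
    intro s hs
    rw [uIcc_of_le ht] at hs
    simp only [max_eq_left hs.1]
  · intro t ht
    rw [(he t ht).2]
    congr 1
    apply intervalIntegral.integral_congr
    intro s hs
    rw [uIcc_of_le ht] at hs
    simp only [max_eq_left hs.1]

lemma aux_decay (B : BranchingMechanism) 
    (hspec : ∀ μ : ℂ, μ ∈ spectrum ℂ ((Hmat B).map (Complex.ofReal ·)) → μ.re < 0)
    {l : ℝ × ℝ} (hl1 : 0 ≤ l.1) (hl2 : 0 ≤ l.2) {U : ℝ → ℝ × ℝ} (hU : SolvesCumulant B l U) :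
    ∃ C c : ℝ, 0 ≤ C ∧ 0 < c ∧ ∀ t, 0 ≤ t →
      (U t).1 ≤ C * Real.exp (-c * t) ∧ (U t).2 ≤ C * Real.exp (-c * t) := by
  obtain ⟨h12, h21, h11, h22, hdet⟩ := aux_spec B hspec
  obtain ⟨c1, c2, e1, e2⟩ := aux_path B hU
  have hn := hU.2.1
  set w1 := -H22 B + H21 B with hw1
  set w2 := -H11 B + H12 B with hw2
  set d := H11 B * H22 B - H12 B * H21 B with hd
  have p1 : 0 < w1 := by linarith
  have p2 : 0 < w2 := by linarith
  set c := d / (w1 + w2) with hc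
  have pc : 0 < c := by positivity
  have hcw : c * (w1 + w2) = d := by rw [hc]; field_simp
  have key : ∀ t, 0 ≤ t → w1 * (U t).1 + w2 * (U t).2 ≤
      (w1 * l.1 + w2 * l.2) * Real.exp (-c * t) := by
    intro t ht
    refine aux_gron (f := fun t => w1 * (U t).1 + w2 * (U t).2)
      (g := fun s => w1 * mPhi1 B (U (max s 0)) + w2 * mPhi2 B (U (max s 0)))
      (by fun_prop) ?_ ?_ ht
    · intro t ht
      rw [intervalIntegral.integral_add ((c1.const_mul w1).intervalIntegrable _ _)
        ((c2.const_mul w2).intervalIntegrable _ _), intervalIntegral.integral_const_mul,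
        intervalIntegral.integral_const_mul, e1 t ht, e2 t ht]
      ring
    · intro t ht
      simp only [max_eq_left ht]
      obtain ⟨n1, n2⟩ := hn t ht
      have u1 := mul_le_mul_of_nonneg_left (aux_Phi1_upper B n1 n2) p1.le
      have u2 := mul_le_mul_of_nonneg_left (aux_Phi2_upper B n1 n2) p2.le
      have i1 : w1 * (H11 B * (U t).1 + H12 B * (U t).2) +
        w2 * (H21 B * (U t).1 + H22 B * (U t).2) = -d * ((U t).1 + (U t).2) := by
        rw [hw1, hw2, hd]; ring
      have i2 : c * (w1 * (U t).1 + w2 * (U t).2) ≤ d * ((U t).1 + (U t).2) := by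
        rw [← hcw]
        have a1 : 0 ≤ c * w2 * (U t).1 := by positivity
        have a2 : 0 ≤ c * w1 * (U t).2 := by positivity
        linarith
      linarith
  refine ⟨(w1 * l.1 + w2 * l.2) / w1 + (w1 * l.1 + w2 * l.2) / w2, c, by positivity, pc, ?_⟩
  intro t ht
  obtain ⟨n1, n2⟩ := hn t ht
  have k := key t ht
  have a1 : 0 ≤ w1 * (U t).1 := by positivity
  have a2 : 0 ≤ w2 * (U t).2 := by positivity
  set A := w1 * l.1 + w2 * l.2 with hA
  have hA0 : 0 ≤ A := by positivity
  set E := Real.exp (-c * t) with hE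
  have hE0 : 0 < E := Real.exp_pos _
  have b1 : (U t).1 ≤ A * E / w1 := by rw [le_div_iff₀ p1]; linarith
  have b2 : (U t).2 ≤ A * E / w2 := by rw [le_div_iff₀ p2]; linarith
  have z1 : 0 ≤ A * E / w1 := by positivity
  have z2 : 0 ≤ A * E / w2 := by positivity
  have : (A / w1 + A / w2) * E = A * E / w1 + A * E / w2 := by ring
  rw [this]
  constructor <;> linarith

lemma aux_lower (B : BranchingMechanism) 
    (hspec : ∀ μ : ℂ, μ ∈ spectrum ℂ ((Hmat B).map (Complex.ofReal ·)) → μ.re < 0)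
    {U : ℝ → ℝ × ℝ} (hU : SolvesCumulant B (1, 1) U) :
    ∃ K : ℝ, 0 < K ∧ ∀ t, 0 ≤ t →
      Real.exp (-K * t) ≤ (U t).1 ∧ Real.exp (-K * t) ≤ (U t).2 := by
  obtain ⟨C, c, hC, hc, hb⟩ := aux_decay B hspec (l := (1,1)) (by simp) (by simp) hU
  obtain ⟨c1, c2, e1, e2⟩ := aux_path B hU
  have hn := hU.2.1
  set M := 1 + C with hM
  have hbM : ∀ t, 0 ≤ t → (U t).1 ≤ M ∧ (U t).2 ≤ M := by
    intro t ht
    have : Real.exp (-c * t) ≤ 1 := Real.exp_le_one_iff.2 (by nlinarith)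
    have h2 : C * Real.exp (-c * t) ≤ C := mul_le_of_le_one_right hC this
    constructor <;> linarith [(hb t ht).1, (hb t ht).2]
  set K1 := |B.a11| + B.alpha * M + M * ∫ z, D1 z ∂B.n1 with hK1
  set K2 := Real.exp M * ∫ z, D2 z ∂B.n2 with hK2
  set K := 1 + |K1| + |K2| with hK
  have hK1K : K1 ≤ K := by linarith [le_abs_self K1, abs_nonneg K2]
  have hK2K : K2 ≤ K := by linarith [le_abs_self K2, abs_nonneg K1]
  refine ⟨K, by positivity, fun t ht => ⟨?_, ?_⟩⟩
  · have := aux_gron (f := fun t => -(U t).1) (g := fun s => -mPhi1 B (U (max s 0)))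
      (a := -1) (c := K) c1.neg ?_ ?_ ht
    · linarith
    · intro t ht
      rw [intervalIntegral.integral_neg, e1 t ht]; ring
    · intro t ht
      simp only [max_eq_left ht]
      have a := aux_Phi1_lower B (M := M) (by linarith) (hn t ht).1 (hn t ht).2 (hbM t ht).1
      have b := mul_le_mul_of_nonneg_right hK1K (hn t ht).1
      linarith
  · have := aux_gron (f := fun t => -(U t).2) (g := fun s => -mPhi2 B (U (max s 0)))
      (a := -1) (c := K) c2.neg ?_ ?_ ht
    · linarith
    · intro t ht
      rw [intervalIntegral.integral_neg, e2 t ht]; ring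
    · intro t ht
      simp only [max_eq_left ht]
      have a := aux_Phi2_lower B (M := M) (hn t ht).1 (hn t ht).2 (hbM t ht).2
      have b := mul_le_mul_of_nonneg_right hK2K (hn t ht).2
      linarith

/-- the immigration part -/
def F3 (z : ℝ × ℝ) : ℝ := min 1 z.1 + min 1 z.2

lemma aux_m_ae {m : Measure (ℝ × ℝ)} (hm : m Msetᶜ = 0) :
    ∀ᵐ z ∂m, 0 ≤ z.1 ∧ (z.2 = 0 ∨ 1 ≤ z.2) := by
  have : ∀ᵐ z ∂m, z ∈ Mset := mem_ae_iff.2 hm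
  filter_upwards [this] with z hz
  obtain ⟨h, n, hn⟩ := hz
  refine ⟨h, ?_⟩
  rcases Nat.eq_zero_or_pos n with h | h
  · left; simp [hn, h]
  · right; rw [hn]; exact_mod_cast h

lemma aux_F3_int {m : Measure (ℝ × ℝ)} (hm : m Msetᶜ = 0)
    (hm_int : ∫⁻ z, ENNReal.ofReal (min 1 z.1 + min 1 z.2) ∂m ≠ ⊤) : Integrable F3 m := by
  have hms : AEStronglyMeasurable F3 m := by
    apply Continuous.aestronglyMeasurable; unfold F3; fun_prop
  refine (lintegral_ofReal_ne_top_iff_integrable (μ := m) (f := F3) hms ?_).1 hm_int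
  filter_upwards [aux_m_ae hm] with z hz
  have : 0 ≤ z.2 := by rcases hz.2 with h | h <;> linarith
  exact add_nonneg (le_min zero_le_one hz.1) (le_min zero_le_one this)

lemma aux_min_mul {a x : ℝ} (ha : 0 ≤ a) (hx : 0 ≤ x) : min 1 (a * x) ≤ (1 + a) * min 1 x := by
  rcases min_choice 1 x with h | h <;> rw [h]
  · exact (min_le_left _ _).trans (by linarith)
  · exact (min_le_right _ _).trans (by nlinarith)

lemma aux_F2_m {l z : ℝ × ℝ} (h1 : 0 ≤ l.1) (h2 : 0 ≤ l.2) (hz1 : 0 ≤ z.1) (hz2 : 0 ≤ z.2) :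
    0 ≤ F2 l z ∧ F2 l z ≤ (1 + l.1 + l.2) * F3 z := by
  have a1 := mul_nonneg h1 hz1
  have a2 := mul_nonneg h2 hz2
  constructor
  · unfold F2
    have : Real.exp (-(l.1 * z.1 + l.2 * z.2)) ≤ 1 := Real.exp_le_one_iff.2 (by linarith)
    linarith
  · have u1 : F2 l z ≤ 1 := by
      unfold F2; linarith [Real.exp_pos (-(l.1 * z.1 + l.2 * z.2))]
    have u2 := aux_F2_upper (l := l) (z := z)
    have h3 : F2 l z ≤ min 1 (l.1 * z.1) + min 1 (l.2 * z.2) := by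
      rcases min_choice 1 (l.1 * z.1) with h | h <;> rcases min_choice 1 (l.2 * z.2) with h' | h' <;>
        rw [h, h'] <;> linarith
    have b1 := aux_min_mul h1 hz1
    have b2 := aux_min_mul h2 hz2
    have m1 : 0 ≤ min 1 z.1 := le_min zero_le_one hz1
    have m2 : 0 ≤ min 1 z.2 := le_min zero_le_one hz2
    unfold F3
    nlinarith [mul_nonneg h2 m1, mul_nonneg h1 m2]

lemma aux_F2_intm {m : Measure (ℝ × ℝ)} (hm : m Msetᶜ = 0)
    (hm_int : ∫⁻ z, ENNReal.ofReal (min 1 z.1 + min 1 z.2) ∂m ≠ ⊤)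
    {l : ℝ × ℝ} (h1 : 0 ≤ l.1) (h2 : 0 ≤ l.2) :
    ENNReal.ofReal (∫ z, F2 l z ∂m) = ∫⁻ z, ENNReal.ofReal (F2 l z) ∂m := by
  have hz : ∀ᵐ z ∂m, 0 ≤ z.1 ∧ 0 ≤ z.2 := by
    filter_upwards [aux_m_ae hm] with z hz
    exact ⟨hz.1, by rcases hz.2 with h | h <;> linarith⟩
  apply ofReal_integral_eq_lintegral_ofReal
  · refine Integrable.mono' ((aux_F3_int hm hm_int).const_mul (1 + l.1 + l.2)) ?_ ?_
    · apply Continuous.aestronglyMeasurable; unfold F2; fun_prop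
    · filter_upwards [hz] with z hz
      have := aux_F2_m h1 h2 hz.1 hz.2
      rw [Real.norm_of_nonneg this.1]; exact this.2
  · filter_upwards [hz] with z hz using (aux_F2_m h1 h2 hz.1 hz.2).1

lemma aux_mono {x y : ℝ} (h : x ≤ y) : 1 - Real.exp (-x) ≤ 1 - Real.exp (-y) := by
  have := Real.exp_le_exp.2 (neg_le_neg h)
  linarith

lemma aux_exp_Ioi {c : ℝ} (hc : 0 < c) (T A : ℝ) (hA : 0 ≤ A) :
    ∫⁻ s in Ioi T, ENNReal.ofReal (A * Real.exp (-c * s)) =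
      ENNReal.ofReal (A * (Real.exp (-c * T) / c)) := by
  have hi : IntegrableOn (fun s => Real.exp (-c * s)) (Ioi T) :=
    integrableOn_exp_mul_Ioi (by linarith) T
  rw [← ofReal_integral_eq_lintegral_ofReal (hi.const_mul A)
    (Eventually.of_forall fun s => by positivity), integral_const_mul,
    integral_exp_mul_Ioi (by linarith : -c < 0)]
  congr 2
  rw [neg_div_neg_eq]

/-- Upper bound of inner time integral. -/
lemma aux_inner_upper {C c r : ℝ} (hC : 0 ≤ C) (hc : 0 < c) (hr : 0 ≤ r) :
    ∫⁻ s in Ioi (0:ℝ), ENNReal.ofReal (1 - Real.exp (-(C * Real.exp (-c * s) * r))) ≤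
      ENNReal.ofReal (Real.log (max 1 r) / c) + ENNReal.ofReal (C / c * min 1 r) := by
  set T := Real.log (max 1 r) / c with hT
  have hT0 : 0 ≤ T := div_nonneg (Real.log_nonneg (le_max_left _ _)) hc.le
  have hexp : Real.exp (-c * T) = (max 1 r)⁻¹ := by
    rw [hT, show -c * (Real.log (max 1 r) / c) = -Real.log (max 1 r) by field_simp,
      Real.exp_neg, Real.exp_log (lt_of_lt_of_le one_pos (le_max_left _ _))]
  rw [← Ioc_union_Ioi_eq_Ioi hT0]
  refine (lintegral_union_le _ _ _).trans (add_le_add ?_ ?_)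
  · calc _ ≤ ∫⁻ s in Ioc 0 T, (1 : ENNReal) := by
          refine lintegral_mono fun s => ?_
          rw [← ENNReal.ofReal_one]
          exact ENNReal.ofReal_le_ofReal (by
            linarith [Real.exp_pos (-(C * Real.exp (-c * s) * r))])
      _ = ENNReal.ofReal T := by simp
  · calc _ ≤ ∫⁻ s in Ioi T, ENNReal.ofReal (C * r * Real.exp (-c * s)) := by
          refine lintegral_mono fun s => ENNReal.ofReal_le_ofReal ?_
          linarith [Real.add_one_le_exp (-(C * Real.exp (-c * s) * r))]
      _ = ENNReal.ofReal (C * r * (Real.exp (-c * T) / c)) :=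
          aux_exp_Ioi hc T _ (by positivity)
      _ = _ := by
          congr 1
          have : r * (max 1 r)⁻¹ = min 1 r := by
            rcases le_total 1 r with h | h
            · rw [max_eq_right h, min_eq_left h, mul_inv_cancel₀ (by linarith)]
            · rw [max_eq_left h, min_eq_right h]; simp
          rw [hexp, ← this]; ring

lemma aux_inner_lower {K r R : ℝ} (hK : 0 < K) (hR : 1 ≤ R) (hr : R ≤ r) :
    ENNReal.ofReal ((1 - Real.exp (-1)) / K) * ENNReal.ofReal (Real.log R) ≤
    ∫⁻ s in Ioi (0:ℝ), ENNReal.ofReal (1 - Real.exp (-(Real.exp (-K * s) * r))) := by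
  have he : 0 ≤ 1 - Real.exp (-1) := by
    have : Real.exp (-1) ≤ 1 := Real.exp_le_one_iff.2 (by norm_num)
    linarith
  set T := Real.log R / K with hT
  have hT0 : 0 ≤ T := div_nonneg (Real.log_nonneg hR) hK.le
  calc _ = ENNReal.ofReal (1 - Real.exp (-1)) * ENNReal.ofReal T := by
        rw [← ENNReal.ofReal_mul (by positivity), ← ENNReal.ofReal_mul he]
        congr 1; rw [hT]; ring
    _ = ∫⁻ s in Ioc 0 T, ENNReal.ofReal (1 - Real.exp (-1)) := by simp
    _ ≤ ∫⁻ s in Ioc 0 T, ENNReal.ofReal (1 - Real.exp (-(Real.exp (-K * s) * r))) := by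
        refine setLIntegral_mono' measurableSet_Ioc fun s hs => ?_
        refine ENNReal.ofReal_le_ofReal (aux_mono ?_)
        have h1 : K * s ≤ Real.log R := by
          have := hs.2
          rw [hT, le_div_iff₀ hK] at this; linarith
        have h2 : Real.exp (-Real.log R) ≤ Real.exp (-K * s) :=
          Real.exp_le_exp.2 (by linarith)
        rw [Real.exp_neg, Real.exp_log (by linarith)] at h2
        calc (1:ℝ) = R⁻¹ * R := by rw [inv_mul_cancel₀ (by linarith)]
          _ ≤ Real.exp (-K * s) * r := by
            apply mul_le_mul h2 hr (by linarith) (Real.exp_pos _).le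
    _ ≤ _ := lintegral_mono_set Ioc_subset_Ioi_self

lemma aux_log_upper {z : ℝ × ℝ} (h1 : 0 ≤ z.1) (h2 : z.2 = 0 ∨ 1 ≤ z.2) :
    ENNReal.ofReal (Real.log (max 1 (z.1 + z.2))) ≤
      indicator {z : ℝ × ℝ | 1 ≤ Real.sqrt (z.1 ^ 2 + z.2 ^ 2)}
        (fun z => ENNReal.ofReal (Real.log (Real.sqrt (z.1 ^ 2 + z.2 ^ 2)))) z +
      ENNReal.ofReal (F3 z) := by
  have hz2 : 0 ≤ z.2 := by rcases h2 with h | h <;> linarith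
  by_cases hz : 1 ≤ Real.sqrt (z.1 ^ 2 + z.2 ^ 2)
  · rw [indicator_of_mem (by exact hz)]
    set R := Real.sqrt (z.1 ^ 2 + z.2 ^ 2) with hR
    have hR2 : R ^ 2 = z.1 ^ 2 + z.2 ^ 2 := Real.sq_sqrt (by positivity)
    have m1 : 0 ≤ min 1 z.1 := le_min zero_le_one h1
    have hF : 1 ≤ F3 z := by
      unfold F3
      rcases h2 with h | h
      · have : 1 ≤ z.1 := by
          rw [h] at hR2; nlinarith
        rw [min_eq_left this]; linarith [le_min zero_le_one hz2]
      · rw [min_eq_left h]; linarith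
    rw [← ENNReal.ofReal_add (Real.log_nonneg hz) (by linarith)]
    apply ENNReal.ofReal_le_ofReal
    have hle : max 1 (z.1 + z.2) ≤ 2 * R := by
      apply max_le (by linarith)
      apply abs_le_of_sq_le_sq' _ (by linarith) |>.2
      nlinarith [sq_nonneg (z.1 - z.2)]
    calc Real.log (max 1 (z.1 + z.2)) ≤ Real.log (2 * R) :=
          Real.log_le_log (lt_of_lt_of_le one_pos (le_max_left _ _)) hle
      _ = Real.log 2 + Real.log R := Real.log_mul (by norm_num) (by linarith)
      _ ≤ _ := by linarith [Real.log_two_lt_d9]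
  · have : max 1 (z.1 + z.2) = 1 := by
      apply max_eq_left
      push Not at hz
      have hlt : z.1 ^ 2 + z.2 ^ 2 < 1 := by
        have := (Real.sqrt_lt' one_pos).1 hz; simpa using this
      rcases h2 with h | h
      · rw [h] at hlt ⊢; nlinarith
      · nlinarith
    rw [this]; simp

/-- Suppose all eigenvalues of `H` have strictly negative real parts,
and let `Ψ` be an immigration mechanism with measure `m`. Then
`∫₀^∞ Ψ(V(s,λ)) ds < ∞` for every `λ ∈ [0,∞)²` if and only if
`∫_{|z|≥1} log |z| m(dz) < ∞` — the condition for existence of a stationary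
distribution of the MSBI-process. -/
theorem stationary_distribution_condition (B : BranchingMechanism)
    (V : ℝ → (ℝ × ℝ) → ℝ × ℝ)
    (hV : ∀ l : ℝ × ℝ, 0 ≤ l.1 → 0 ≤ l.2 → SolvesCumulant B l (fun t => V t l))
    (hspec : ∀ μ : ℂ, μ ∈ spectrum ℂ ((Hmat B).map (Complex.ofReal ·)) → μ.re < 0)
    (b : ℝ) (hb : 0 < b) (m : Measure (ℝ × ℝ))
    (hm_sf : SigmaFinite m) (hm_supp : m Msetᶜ = 0) (hm_zero : m {0} = 0)
    (hm_int : ∫⁻ z, ENNReal.ofReal (min 1 z.1 + min 1 z.2) ∂m ≠ ⊤) :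
    (∀ l : ℝ × ℝ, 0 ≤ l.1 → 0 ≤ l.2 →
        ∫⁻ s in Ioi (0:ℝ), ENNReal.ofReal (mPsi b m (V s l)) ≠ ⊤) ↔
      ∫⁻ z in {z : ℝ × ℝ | 1 ≤ Real.sqrt (z.1 ^ 2 + z.2 ^ 2)},
          ENNReal.ofReal (Real.log (Real.sqrt (z.1 ^ 2 + z.2 ^ 2))) ∂m ≠ ⊤ := by
  have hFm : ∀ l : ℝ × ℝ, mPsi b m l = b * l.1 + ∫ z, F2 l z ∂m := fun l => rfl
  have hSm : MeasurableSet {z : ℝ × ℝ | 1 ≤ Real.sqrt (z.1 ^ 2 + z.2 ^ 2)} := by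
    apply measurableSet_le <;> fun_prop
  constructor
  · intro H
    have hs := hV (1, 1) (by simp) (by simp)
    obtain ⟨K, hK, hlow⟩ := aux_lower B hspec hs
    have hfin := H (1, 1) (by simp) (by simp)
    have he : 0 < (1 - Real.exp (-1)) / K := by
      have : Real.exp (-1) < 1 := by
        rw [← Real.exp_zero]; exact Real.exp_lt_exp.2 (by norm_num)
      exact div_pos (by linarith) hK
    have hle : ENNReal.ofReal ((1 - Real.exp (-1)) / K) *
        (∫⁻ z in {z : ℝ × ℝ | 1 ≤ Real.sqrt (z.1 ^ 2 + z.2 ^ 2)},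
          ENNReal.ofReal (Real.log (Real.sqrt (z.1 ^ 2 + z.2 ^ 2))) ∂m) ≤
        ∫⁻ s in Ioi (0:ℝ), ENNReal.ofReal (mPsi b m (V s (1, 1))) := by
      calc _ = ∫⁻ z in {z : ℝ × ℝ | 1 ≤ Real.sqrt (z.1 ^ 2 + z.2 ^ 2)},
              ENNReal.ofReal ((1 - Real.exp (-1)) / K) *
              ENNReal.ofReal (Real.log (Real.sqrt (z.1 ^ 2 + z.2 ^ 2))) ∂m := by
            rw [lintegral_const_mul]
            fun_prop
        _ ≤ ∫⁻ z in {z : ℝ × ℝ | 1 ≤ Real.sqrt (z.1 ^ 2 + z.2 ^ 2)},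
              (∫⁻ s in Ioi (0:ℝ), ENNReal.ofReal
                (1 - Real.exp (-(Real.exp (-K * s) * (z.1 + z.2))))) ∂m := by
            apply lintegral_mono_ae
            filter_upwards [ae_restrict_mem hSm, ae_restrict_of_ae (aux_m_ae hm_supp)] with z hz hz'
            have hz2 : 0 ≤ z.2 := by rcases hz'.2 with h | h <;> linarith
            refine aux_inner_lower hK hz ?_
            rw [Real.sqrt_le_left (by linarith [hz'.1])]
            nlinarith [mul_nonneg hz'.1 hz2]
        _ ≤ ∫⁻ z, (∫⁻ s in Ioi (0:ℝ), ENNReal.ofReal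
                (1 - Real.exp (-(Real.exp (-K * s) * (z.1 + z.2))))) ∂m :=
            setLIntegral_le_lintegral _ _
        _ = ∫⁻ s in Ioi (0:ℝ), ∫⁻ z, ENNReal.ofReal
                (1 - Real.exp (-(Real.exp (-K * s) * (z.1 + z.2)))) ∂m := by
            apply lintegral_lintegral_swap
            apply Measurable.aemeasurable
            unfold Function.uncurry
            fun_prop
        _ ≤ _ := by
            refine setLIntegral_mono' measurableSet_Ioi fun s hs0 => ?_
            have hs0' : (0:ℝ) ≤ s := le_of_lt hs0
            obtain ⟨n1, n2⟩ := hs.2.1 s hs0'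
            obtain ⟨l1, l2⟩ := hlow s hs0'
            rw [hFm]
            calc _ ≤ ∫⁻ z, ENNReal.ofReal (F2 (V s (1, 1)) z) ∂m := by
                  apply lintegral_mono_ae
                  filter_upwards [aux_m_ae hm_supp] with z hz
                  have hz2 : 0 ≤ z.2 := by rcases hz.2 with h | h <;> linarith
                  refine ENNReal.ofReal_le_ofReal (aux_mono ?_)
                  have := mul_le_mul_of_nonneg_right l1 hz.1
                  have := mul_le_mul_of_nonneg_right l2 hz2
                  linarith
              _ = ENNReal.ofReal (∫ z, F2 (V s (1, 1)) z ∂m) :=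
                  (aux_F2_intm hm_supp hm_int n1 n2).symm
              _ ≤ _ := ENNReal.ofReal_le_ofReal (by
                  have := mul_nonneg hb.le n1
                  linarith)
    intro htop
    rw [htop, ENNReal.mul_top (by simpa using he)] at hle
    exact hfin (top_le_iff.1 hle)
  · intro H l hl1 hl2
    have hs := hV l hl1 hl2
    obtain ⟨C, c, hC, hc, hup⟩ := aux_decay B hspec hl1 hl2 hs
    have hF3top : ∫⁻ z, ENNReal.ofReal (F3 z) ∂m ≠ ⊤ := hm_int
    have hF3meas : Measurable (fun z => ENNReal.ofReal (F3 z)) := by unfold F3; fun_prop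
    have hle : ∫⁻ s in Ioi (0:ℝ), ENNReal.ofReal (mPsi b m (V s l)) ≤
        ENNReal.ofReal (b * C * (Real.exp (-c * 0) / c)) +
        (ENNReal.ofReal (1 / c) * ((∫⁻ z in {z : ℝ × ℝ | 1 ≤ Real.sqrt (z.1 ^ 2 + z.2 ^ 2)},
          ENNReal.ofReal (Real.log (Real.sqrt (z.1 ^ 2 + z.2 ^ 2))) ∂m) +
          ∫⁻ z, ENNReal.ofReal (F3 z) ∂m) +
          ENNReal.ofReal (C / c) * ∫⁻ z, ENNReal.ofReal (F3 z) ∂m) := by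
      calc _ ≤ ∫⁻ s in Ioi (0:ℝ), (ENNReal.ofReal (b * C * Real.exp (-c * s)) +
              ∫⁻ z, ENNReal.ofReal
                (1 - Real.exp (-(C * Real.exp (-c * s) * (z.1 + z.2)))) ∂m) := by
            refine setLIntegral_mono' measurableSet_Ioi fun s hs0 => ?_
            have hs0' : (0:ℝ) ≤ s := le_of_lt hs0
            obtain ⟨n1, n2⟩ := hs.2.1 s hs0'
            obtain ⟨l1, l2⟩ := hup s hs0'
            rw [hFm]
            refine ENNReal.ofReal_add_le.trans (add_le_add ?_ ?_)
            · apply ENNReal.ofReal_le_ofReal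
              have := mul_le_mul_of_nonneg_left l1 hb.le
              linarith
            · rw [aux_F2_intm hm_supp hm_int n1 n2]
              apply lintegral_mono_ae
              filter_upwards [aux_m_ae hm_supp] with z hz
              have hz2 : 0 ≤ z.2 := by rcases hz.2 with h | h <;> linarith
              refine ENNReal.ofReal_le_ofReal (aux_mono ?_)
              have := mul_le_mul_of_nonneg_right l1 hz.1
              have := mul_le_mul_of_nonneg_right l2 hz2
              linarith
        _ = ENNReal.ofReal (b * C * (Real.exp (-c * 0) / c)) +
              ∫⁻ s in Ioi (0:ℝ), ∫⁻ z, ENNReal.ofReal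
                (1 - Real.exp (-(C * Real.exp (-c * s) * (z.1 + z.2)))) ∂m := by
            rw [lintegral_add_left (by fun_prop), aux_exp_Ioi hc 0 _ (by positivity)]
        _ = ENNReal.ofReal (b * C * (Real.exp (-c * 0) / c)) +
              ∫⁻ z, (∫⁻ s in Ioi (0:ℝ), ENNReal.ofReal
                (1 - Real.exp (-(C * Real.exp (-c * s) * (z.1 + z.2))))) ∂m := by
            congr 1
            apply lintegral_lintegral_swap
            apply Measurable.aemeasurable
            unfold Function.uncurry
            fun_prop
        _ ≤ ENNReal.ofReal (b * C * (Real.exp (-c * 0) / c)) +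
              ∫⁻ z, (ENNReal.ofReal (1 / c) *
               (indicator {z : ℝ × ℝ | 1 ≤ Real.sqrt (z.1 ^ 2 + z.2 ^ 2)}
                (fun z => ENNReal.ofReal (Real.log (Real.sqrt (z.1 ^ 2 + z.2 ^ 2)))) z +
                ENNReal.ofReal (F3 z)) + ENNReal.ofReal (C / c) * ENNReal.ofReal (F3 z)) ∂m := by
            refine add_le_add le_rfl ?_
            apply lintegral_mono_ae
            filter_upwards [aux_m_ae hm_supp] with z hz
            have hz2 : 0 ≤ z.2 := by rcases hz.2 with h | h <;> linarith
            refine (aux_inner_upper hC hc (add_nonneg hz.1 hz2)).trans (add_le_add ?_ ?_)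
            · rw [div_eq_mul_one_div, mul_comm, ENNReal.ofReal_mul (by positivity)]
              gcongr
              exact aux_log_upper hz.1 hz.2
            · rw [ENNReal.ofReal_mul (by positivity)]
              gcongr
              unfold F3
              rcases min_choice 1 z.1 with h | h <;> rcases min_choice 1 z.2 with h' | h' <;>
                rw [h, h']
              · exact (min_le_left _ _).trans (by norm_num)
              · exact (min_le_left _ _).trans (by linarith)
              · exact (min_le_left _ _).trans (by linarith [hz.1])
              · exact min_le_right _ _
        _ = _ := by
            rw [lintegral_add_right _ (hF3meas.const_mul _), lintegral_const_mul _ hF3meas,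
              lintegral_const_mul, lintegral_add_right _ hF3meas, lintegral_indicator hSm]
            refine Measurable.add (Measurable.indicator ?_ hSm) hF3meas
            fun_prop
    refine ne_top_of_le_ne_top ?_ hle
    refine ENNReal.add_ne_top.2 ⟨ENNReal.ofReal_ne_top, ENNReal.add_ne_top.2 ⟨?_, ?_⟩⟩
    · exact ENNReal.mul_ne_top ENNReal.ofReal_ne_top (ENNReal.add_ne_top.2 ⟨H, hF3top⟩)
    · exact ENNReal.mul_ne_top ENNReal.ofReal_ne_top hF3top
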